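/- In the model of superfunctions on Minkowski superspacetime fixed in the context, the left-invariant odd derivatives satisfy, as operators on smooth maps f : ℝ⁴ → Λ: (i) D_a D_b + D_b D_a = 0 and D̄_a D̄_b + D̄_b D̄_a = 0 for all a,b ∈ {1,2}; (ii) D_a D̄_b + D̄_b D_a = −2i Σ_{μ=0}^{3} Γ^μ_{ab} ∂_μ for all a,b ∈ {1,2}; (iii) every one of D_a, D̄_a anticommutes with every one of Q_b, Q̄_b, i.e. Q_a D_b + D_b Q_a = 0, Q_a D̄_b + D̄_b Q_a = 0, Q̄_a D_b + D_b Q̄_a = 0, and Q̄_a D̄_b + D̄_b Q̄_a = 0 for all a,b ∈ {1,2}. -/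

import Mathlib

noncomputable section

/-- Coordinates of the exterior algebra `Λ = ⋀(ℂ⁴)` with distinguished basis
`θ¹, θ², θ̄¹, θ̄²` (indexed `0,1,2,3`): an element is given by its coefficients on the
basis monomials `θ_S` (`S ⊆ {0,1,2,3}`, factors in increasing index order). -/
abbrev Lam : Type := Finset (Fin 4) → ℂ

/-- The Koszul sign `(−1)^{#{j ∈ S : j < i}}`. -/
def ksign (i : Fin 4) (S : Finset (Fin 4)) : ℂ := (-1 : ℂ) ^ (S.filter (· < i)).card

/-- Left exterior multiplication `e_v` by the `i`-th basis vector, in coordinates. -/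
def eOp (i : Fin 4) (a : Lam) : Lam := fun S =>
  if i ∈ S then ksign i S * a (S.erase i) else 0

/-- The odd derivation `∂_v` dual to the `i`-th basis vector (`∂_v(w) = δ_{v,w}` on basis
vectors, graded Leibniz rule), in coordinates. -/
def dOp (i : Fin 4) (a : Lam) : Lam := fun S =>
  if i ∈ S then 0 else ksign i S * a (insert i S)

/-- The matrices `Γ⁰ = I`, `Γ¹ = diag(1,−1)`, `Γ² = ((0,1),(1,0))`, `Γ³ = ((0,−i),(i,0))`. -/
def Gam : Fin 4 → Matrix (Fin 2) (Fin 2) ℂ :=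
  ![!![1, 0; 0, 1], !![1, 0; 0, -1], !![0, 1; 1, 0], !![0, -Complex.I; Complex.I, 0]]

/-- Index of `θ^a` (for `a ∈ {1,2}`, i.e. `a : Fin 2`). -/
def θi (a : Fin 2) : Fin 4 := ⟨a.val, by have := a.isLt; omega⟩

/-- Index of `θ̄^a` (for `a ∈ {1,2}`, i.e. `a : Fin 2`). -/
def θbi (a : Fin 2) : Fin 4 := ⟨a.val + 2, by have := a.isLt; omega⟩

/-- The partial derivative `∂_μ` of a superfunction `f : ℝ⁴ → Λ`. -/
def pd (μ : Fin 4) (f : (Fin 4 → ℝ) → Lam) : (Fin 4 → ℝ) → Lam :=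
  fun x => fderiv ℝ f x (Pi.single μ 1)

/-- The supersymmetry generator `Q_a = ∂_{θ^a} + i Σ_{μ,b} Γ^μ_{ab} e_{θ̄^b} ∂_μ`. -/
def QOp (a : Fin 2) (f : (Fin 4 → ℝ) → Lam) : (Fin 4 → ℝ) → Lam :=
  fun x => dOp (θi a) (f x) +
    ∑ μ : Fin 4, ∑ b : Fin 2, (Complex.I * Gam μ a b) • eOp (θbi b) (pd μ f x)

/-- The supersymmetry generator `Q̄_b = ∂_{θ̄^b} + i Σ_{μ,a} Γ^μ_{ab} e_{θ^a} ∂_μ`. -/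
def QbOp (b : Fin 2) (f : (Fin 4 → ℝ) → Lam) : (Fin 4 → ℝ) → Lam :=
  fun x => dOp (θbi b) (f x) +
    ∑ μ : Fin 4, ∑ a : Fin 2, (Complex.I * Gam μ a b) • eOp (θi a) (pd μ f x)


/-- The left-invariant odd derivative `D_a = ∂_{θ^a} − i Σ_{μ,b} Γ^μ_{ab} e_{θ̄^b} ∂_μ`. -/
def DOp (a : Fin 2) (f : (Fin 4 → ℝ) → Lam) : (Fin 4 → ℝ) → Lam :=
  fun x => dOp (θi a) (f x) -
    ∑ μ : Fin 4, ∑ b : Fin 2, (Complex.I * Gam μ a b) • eOp (θbi b) (pd μ f x)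

/-- The left-invariant odd derivative `D̄_b = ∂_{θ̄^b} − i Σ_{μ,a} Γ^μ_{ab} e_{θ^a} ∂_μ`. -/
def DbOp (b : Fin 2) (f : (Fin 4 → ℝ) → Lam) : (Fin 4 → ℝ) → Lam :=
  fun x => dOp (θbi b) (f x) -
    ∑ μ : Fin 4, ∑ a : Fin 2, (Complex.I * Gam μ a b) • eOp (θi a) (pd μ f x)


/-!
The operators `e_j` and `∂_j` on `Λ` satisfy the canonical anticommutation relations
`{e_i, e_j} = {∂_i, ∂_j} = 0` and `{∂_i, e_j} = δ_{ij}`. Each of `Q_a`, `Q̄_a`, `D_a`, `D̄_a` is a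
constant-coefficient operator `∂_i + Σ_{μ,j} c_{μj} e_j ∂_μ`. In the anticommutator of two of them
the second-order part vanishes because the `e_j` anticommute while the `∂_μ` commute, the
zeroth-order part vanishes because the `∂_i` anticommute, and `{∂_i, e_j} = δ_{ij}` leaves the
first-order part `Σ_μ (c'_{μi} + c_{μk}) ∂_μ`.
-/

section FirstOrderOp

variable {𝕜 𝕜' E F ι : Type*} [RCLike 𝕜] [NontriviallyNormedField 𝕜'] [NormedAlgebra 𝕜 𝕜']
  [NormedAddCommGroup E] [NormedSpace 𝕜 E] [NormedAddCommGroup F] [NormedSpace 𝕜 F]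
  [NormedSpace 𝕜' F] [IsScalarTower 𝕜 𝕜' F]

theorem differentiableAt_fderiv_apply {f : E → F} {x : E} (hf : ContDiffAt 𝕜 2 f x) (v : E) :
    DifferentiableAt 𝕜 (fun y => fderiv 𝕜 f y v) x :=
  ((hf.fderiv_right (m := 1) (by norm_num)).differentiableAt one_ne_zero).clm_apply
    (differentiableAt_const v)

theorem fderiv_fderiv_apply_comm {f : E → F} {x : E} (hf : ContDiffAt 𝕜 2 f x) (v w : E) :
    fderiv 𝕜 (fun y => fderiv 𝕜 f y v) x w = fderiv 𝕜 (fun y => fderiv 𝕜 f y w) x v := by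
  have hd : DifferentiableAt 𝕜 (fderiv 𝕜 f) x :=
    (hf.fderiv_right (m := 1) (by norm_num)).differentiableAt one_ne_zero
  have hsymm : IsSymmSndFDerivAt 𝕜 f x := hf.isSymmSndFDerivAt (by simp)
  rw [fderiv_clm_apply hd (differentiableAt_const v),
    fderiv_clm_apply hd (differentiableAt_const w)]
  simpa using hsymm.eq w v

theorem hasFDerivAt_restrictScalars_comp (L : F →L[𝕜'] F) {f : E → F} {x : E}
    (hf : DifferentiableAt 𝕜 f x) :
    HasFDerivAt (fun y => L (f y)) ((L.restrictScalars 𝕜).comp (fderiv 𝕜 f x)) x :=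
  (L.restrictScalars 𝕜).hasFDerivAt.comp x hf.hasFDerivAt

variable [Fintype ι]

variable (𝕜) in
/-- The first-order differential operator `A + Σ_μ B_μ ∂_{v_μ}` with constant operator-valued
coefficients, acting on functions `E → F`. The coefficients may be linear over a larger field `𝕜'`
than the field `𝕜` of differentiation. -/
def firstOrderOp (v : ι → E) (A : F →L[𝕜'] F) (B : ι → F →L[𝕜'] F) (f : E → F) (x : E) : F :=
  A (f x) + ∑ μ, B μ (fderiv 𝕜 f x (v μ))

theorem fderiv_firstOrderOp (v : ι → E) (A : F →L[𝕜'] F) (B : ι → F →L[𝕜'] F) {f : E → F} {x : E}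
    (hf : ContDiffAt 𝕜 2 f x) (w : E) :
    fderiv 𝕜 (firstOrderOp 𝕜 v A B f) x w =
      firstOrderOp 𝕜 v A B (fun y => fderiv 𝕜 f y w) x := by
  have hA := hasFDerivAt_restrictScalars_comp A (hf.differentiableAt two_ne_zero)
  have hB := HasFDerivAt.fun_sum (u := Finset.univ) fun μ _ =>
    hasFDerivAt_restrictScalars_comp (B μ) (differentiableAt_fderiv_apply hf (v μ))
  have hAB : HasFDerivAt (firstOrderOp 𝕜 v A B f) _ x := hA.add hB
  simp [hAB.fderiv, firstOrderOp, fderiv_fderiv_apply_comm hf _ w]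

theorem firstOrderOp_firstOrderOp (v : ι → E) (A A' : F →L[𝕜'] F) (B B' : ι → F →L[𝕜'] F)
    {f : E → F} {x : E} (hf : ContDiffAt 𝕜 2 f x) :
    firstOrderOp 𝕜 v A B (firstOrderOp 𝕜 v A' B' f) x =
      A (A' (f x)) +
        ∑ μ, (A (B' μ (fderiv 𝕜 f x (v μ))) + B μ (A' (fderiv 𝕜 f x (v μ)))) +
        ∑ μ, ∑ ν, B μ (B' ν (fderiv 𝕜 (fun y => fderiv 𝕜 f y (v μ)) x (v ν))) := by
  rw [firstOrderOp]
  simp only [fderiv_firstOrderOp v A' B' hf]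
  simp only [firstOrderOp, map_add, map_sum, Finset.sum_add_distrib]
  abel

theorem firstOrderOp_anticomm (v : ι → E) (A A' : F →L[𝕜'] F) (B B' : ι → F →L[𝕜'] F)
    (hA : ∀ a, A (A' a) + A' (A a) = 0) (hB : ∀ μ ν a, B μ (B' ν a) + B' ν (B μ a) = 0)
    {f : E → F} {x : E} (hf : ContDiffAt 𝕜 2 f x) :
    firstOrderOp 𝕜 v A B (firstOrderOp 𝕜 v A' B' f) x +
        firstOrderOp 𝕜 v A' B' (firstOrderOp 𝕜 v A B f) x =
      ∑ μ, (A (B' μ (fderiv 𝕜 f x (v μ))) + B' μ (A (fderiv 𝕜 f x (v μ)))) +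
        ∑ μ, (A' (B μ (fderiv 𝕜 f x (v μ))) + B μ (A' (fderiv 𝕜 f x (v μ)))) := by
  have second_order :
      ∑ μ, ∑ ν, B μ (B' ν (fderiv 𝕜 (fun y => fderiv 𝕜 f y (v μ)) x (v ν))) +
        ∑ μ, ∑ ν, B' μ (B ν (fderiv 𝕜 (fun y => fderiv 𝕜 f y (v μ)) x (v ν))) = 0 := by
    rw [Finset.sum_comm (f := fun μ ν => B' μ (B ν _))]
    simp only [← Finset.sum_add_distrib]
    refine Finset.sum_eq_zero fun μ _ => Finset.sum_eq_zero fun ν _ => ?_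
    rw [fderiv_fderiv_apply_comm hf (v ν) (v μ), hB]
  rw [firstOrderOp_firstOrderOp v A A' B B' hf, firstOrderOp_firstOrderOp v A' A B' B hf,
    add_add_add_comm, second_order, add_zero, add_add_add_comm, hA, zero_add]
  simp only [Finset.sum_add_distrib]
  abel

end FirstOrderOp

section KoszulSign

theorem ite_lt_add_ite_gt {α R : Type*} [LinearOrder α] [Ring R] {i j : α} (hij : i ≠ j) :
    (if i < j then -1 else 1 : R) + (if j < i then -1 else 1) = 0 := by
  rcases hij.lt_or_gt with h | h <;> simp [h, h.not_gt]

variable {i j : Fin 4} {S : Finset (Fin 4)}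

theorem ksign_mul_self (i : Fin 4) (S : Finset (Fin 4)) : ksign i S * ksign i S = 1 := by
  rw [ksign, ← mul_pow, neg_one_mul, neg_neg, one_pow]

theorem ksign_insert (hj : j ∉ S) :
    ksign i (insert j S) = (if j < i then -1 else 1) * ksign i S := by
  unfold ksign
  split_ifs with h
  · simp [Finset.filter_insert, h, hj, pow_succ]
  · simp [Finset.filter_insert, h]

theorem ksign_erase (hj : j ∈ S) :
    ksign i (S.erase j) = (if j < i then -1 else 1) * ksign i S := by
  rw [← Finset.insert_erase hj, ksign_insert (Finset.notMem_erase j S), Finset.insert_erase hj,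
    ← mul_assoc]
  split_ifs <;> simp

end KoszulSign

section AnticommutationRelations

theorem eOp_eOp_add_eOp_eOp (i j : Fin 4) (a : Lam) : eOp i (eOp j a) + eOp j (eOp i a) = 0 := by
  funext S
  obtain rfl | hij := eq_or_ne i j
  · simp [eOp]
  by_cases hS : i ∈ S ∧ j ∈ S
  · obtain ⟨hi, hj⟩ := hS
    suffices ksign i S * (ksign j (S.erase i) * a ((S.erase i).erase j)) +
        ksign j S * (ksign i (S.erase j) * a ((S.erase j).erase i)) = 0 by
      simpa [eOp, hi, hj, hij, hij.symm]
    rw [ksign_erase hi, ksign_erase hj, Finset.erase_right_comm]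
    linear_combination
      ksign i S * ksign j S * a ((S.erase j).erase i) * ite_lt_add_ite_gt (R := ℂ) hij
  · obtain hi | hj := not_and_or.1 hS
    · simp [eOp, hi]
    · simp [eOp, hj]

theorem dOp_dOp_add_dOp_dOp (i j : Fin 4) (a : Lam) : dOp i (dOp j a) + dOp j (dOp i a) = 0 := by
  funext S
  obtain rfl | hij := eq_or_ne i j
  · simp [dOp]
  by_cases hS : i ∈ S ∨ j ∈ S
  · obtain hi | hj := hS
    · simp [dOp, hi]
    · simp [dOp, hj]
  · obtain ⟨hi, hj⟩ := not_or.1 hS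
    suffices ksign i S * (ksign j (insert i S) * a (insert j (insert i S))) +
        ksign j S * (ksign i (insert j S) * a (insert i (insert j S))) = 0 by
      simpa [dOp, hi, hj, hij, hij.symm]
    rw [ksign_insert hi, ksign_insert hj, Finset.insert_comm]
    linear_combination
      ksign i S * ksign j S * a (insert i (insert j S)) * ite_lt_add_ite_gt (R := ℂ) hij

theorem dOp_eOp_add_eOp_dOp_self (i : Fin 4) (a : Lam) : dOp i (eOp i a) + eOp i (dOp i a) = a := by
  funext S
  by_cases hi : i ∈ S
  · simp [dOp, eOp, hi, ksign_erase, ← mul_assoc, ksign_mul_self]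
  · simp [dOp, eOp, hi, ksign_insert, ← mul_assoc, ksign_mul_self]

theorem dOp_eOp_add_eOp_dOp_of_ne {i j : Fin 4} (hij : i ≠ j) (a : Lam) :
    dOp i (eOp j a) + eOp j (dOp i a) = 0 := by
  funext S
  by_cases hS : i ∉ S ∧ j ∈ S
  · obtain ⟨hi, hj⟩ := hS
    suffices ksign i S * (ksign j (insert i S) * a ((insert i S).erase j)) +
        ksign j S * (ksign i (S.erase j) * a (insert i (S.erase j))) = 0 by
      simpa [dOp, eOp, hi, hj, hij, hij.symm]
    rw [ksign_insert hi, ksign_erase hj, Finset.erase_insert_of_ne hij]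
    linear_combination
      ksign i S * ksign j S * a (insert i (S.erase j)) * ite_lt_add_ite_gt (R := ℂ) hij
  · obtain hi | hj := not_and_or.1 hS
    · simp [dOp, eOp, not_not.1 hi, hij]
    · simp [dOp, eOp, hj, hij.symm]

/-- Left exterior multiplication `eOp i` as a linear endomorphism of `Λ`. -/
def eEnd (i : Fin 4) : Module.End ℂ Lam where
  toFun := eOp i
  map_add' a b := by ext S; simp [eOp, ite_add_zero, mul_add]
  map_smul' c a := by ext S; simp [eOp, mul_left_comm]

/-- The odd derivation `dOp i` as a linear endomorphism of `Λ`. -/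
def dEnd (i : Fin 4) : Module.End ℂ Lam where
  toFun := dOp i
  map_add' a b := by ext S; simp only [dOp, Pi.add_apply]; split_ifs <;> ring
  map_smul' c a := by ext S; simp [dOp, mul_left_comm]

theorem eEnd_apply (i : Fin 4) (a : Lam) : eEnd i a = eOp i a := rfl

theorem dEnd_apply (i : Fin 4) (a : Lam) : dEnd i a = dOp i a := rfl

theorem eEnd_anticomm (i j : Fin 4) : eEnd i * eEnd j + eEnd j * eEnd i = 0 :=
  LinearMap.ext (eOp_eOp_add_eOp_eOp i j)

theorem dEnd_anticomm (i j : Fin 4) : dEnd i * dEnd j + dEnd j * dEnd i = 0 :=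
  LinearMap.ext (dOp_dOp_add_dOp_dOp i j)

theorem dEnd_eEnd_anticomm (i j : Fin 4) :
    dEnd i * eEnd j + eEnd j * dEnd i = if i = j then 1 else 0 := by
  split_ifs with hij
  · subst hij
    exact LinearMap.ext (dOp_eOp_add_eOp_dOp_self i)
  · exact LinearMap.ext (dOp_eOp_add_eOp_dOp_of_ne hij)

theorem mul_sum_smul_add_sum_smul_mul {K R ι : Type*} [CommSemiring K] [Semiring R] [Algebra K R]
    (s : Finset ι) (u : ι → K) (r : ι → R) (y : R) :
    y * ∑ j ∈ s, u j • r j + (∑ j ∈ s, u j • r j) * y = ∑ j ∈ s, u j • (y * r j + r j * y) := by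
  simp only [Finset.mul_sum, Finset.sum_mul, mul_smul_comm, smul_mul_assoc, smul_add,
    Finset.sum_add_distrib]

/-- Left exterior multiplication by the vector of `ℂ⁴` with coordinates `u` in the distinguished
basis. -/
def vecMulEnd (u : Fin 4 → ℂ) : Module.End ℂ Lam := ∑ j, u j • eEnd j

theorem eEnd_vecMulEnd_anticomm (i : Fin 4) (u : Fin 4 → ℂ) :
    eEnd i * vecMulEnd u + vecMulEnd u * eEnd i = 0 := by
  simp only [vecMulEnd, mul_sum_smul_add_sum_smul_mul, eEnd_anticomm, smul_zero,
    Finset.sum_const_zero]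

theorem vecMulEnd_anticomm (u w : Fin 4 → ℂ) :
    vecMulEnd u * vecMulEnd w + vecMulEnd w * vecMulEnd u = 0 := by
  rw [add_comm, vecMulEnd.eq_1 u, mul_sum_smul_add_sum_smul_mul]
  simp only [add_comm (vecMulEnd w * _), eEnd_vecMulEnd_anticomm, smul_zero, Finset.sum_const_zero]

theorem dEnd_vecMulEnd_anticomm (i : Fin 4) (u : Fin 4 → ℂ) :
    dEnd i * vecMulEnd u + vecMulEnd u * dEnd i = u i • 1 := by
  simp [vecMulEnd, mul_sum_smul_add_sum_smul_mul, dEnd_eEnd_anticomm]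

end AnticommutationRelations

section SuperDeriv

/-- The odd first-order operator `∂_i + Σ_{μ,j} c_{μj} e_j ∂_μ` on superfunctions. -/
def superDeriv (i : Fin 4) (c : Fin 4 → Fin 4 → ℂ) :
    ((Fin 4 → ℝ) → Lam) → (Fin 4 → ℝ) → Lam :=
  firstOrderOp ℝ (fun μ => Pi.single μ 1) (LinearMap.toContinuousLinearMap (dEnd i))
    fun μ => LinearMap.toContinuousLinearMap (vecMulEnd (c μ))

theorem superDeriv_apply (i : Fin 4) (c : Fin 4 → Fin 4 → ℂ) (f : (Fin 4 → ℝ) → Lam)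
    (x : Fin 4 → ℝ) :
    superDeriv i c f x = dOp i (f x) + ∑ μ, ∑ j, c μ j • eOp j (pd μ f x) := by
  simp [superDeriv, firstOrderOp, vecMulEnd, eEnd_apply, dEnd_apply, pd]

theorem superDeriv_anticomm (i k : Fin 4) (c c' : Fin 4 → Fin 4 → ℂ)
    {f : (Fin 4 → ℝ) → Lam} {x : Fin 4 → ℝ} (hf : ContDiffAt ℝ 2 f x) :
    superDeriv i c (superDeriv k c' f) x + superDeriv k c' (superDeriv i c f) x =
      ∑ μ, (c' μ i + c μ k) • pd μ f x := by
  have hd : ∀ a, dEnd i (dEnd k a) + dEnd k (dEnd i a) = 0 :=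
    LinearMap.congr_fun (dEnd_anticomm i k)
  have he : ∀ μ ν a, vecMulEnd (c μ) (vecMulEnd (c' ν) a) +
      vecMulEnd (c' ν) (vecMulEnd (c μ) a) = 0 := fun μ ν =>
    LinearMap.congr_fun (vecMulEnd_anticomm (c μ) (c' ν))
  have hde : ∀ (i : Fin 4) (u : Fin 4 → ℂ) (a : Lam),
      dEnd i (vecMulEnd u a) + vecMulEnd u (dEnd i a) = u i • a := fun i u =>
    LinearMap.congr_fun (dEnd_vecMulEnd_anticomm i u)
  calc
    _ = ∑ μ, (dEnd i (vecMulEnd (c' μ) (pd μ f x)) + vecMulEnd (c' μ) (dEnd i (pd μ f x))) +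
        ∑ μ, (dEnd k (vecMulEnd (c μ) (pd μ f x)) + vecMulEnd (c μ) (dEnd k (pd μ f x))) :=
      firstOrderOp_anticomm _ (LinearMap.toContinuousLinearMap (dEnd i))
        (LinearMap.toContinuousLinearMap (dEnd k))
        (fun μ => LinearMap.toContinuousLinearMap (vecMulEnd (c μ)))
        (fun μ => LinearMap.toContinuousLinearMap (vecMulEnd (c' μ))) hd he hf
    _ = ∑ μ, (c' μ i + c μ k) • pd μ f x := by
      simp only [hde, add_smul, Finset.sum_add_distrib]

/-- The coefficients `i Γ^μ_{ab}` of `e_{θ̄^b} ∂_μ` in `Q_a`. -/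
def thetaBarCoeff (a : Fin 2) (μ : Fin 4) : Fin 4 → ℂ :=
  ![0, 0, Complex.I * Gam μ a 0, Complex.I * Gam μ a 1]

/-- The coefficients `i Γ^μ_{ab}` of `e_{θ^a} ∂_μ` in `Q̄_b`. -/
def thetaCoeff (b : Fin 2) (μ : Fin 4) : Fin 4 → ℂ :=
  ![Complex.I * Gam μ 0 b, Complex.I * Gam μ 1 b, 0, 0]

theorem thetaBarCoeff_θi (a b : Fin 2) (μ : Fin 4) : thetaBarCoeff a μ (θi b) = 0 := by
  fin_cases b <;> rfl

theorem thetaBarCoeff_θbi (a b : Fin 2) (μ : Fin 4) :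
    thetaBarCoeff a μ (θbi b) = Complex.I * Gam μ a b := by
  fin_cases b <;> rfl

theorem thetaCoeff_θi (a b : Fin 2) (μ : Fin 4) :
    thetaCoeff b μ (θi a) = Complex.I * Gam μ a b := by
  fin_cases a <;> rfl

theorem thetaCoeff_θbi (a b : Fin 2) (μ : Fin 4) : thetaCoeff b μ (θbi a) = 0 := by
  fin_cases a <;> rfl

theorem sum_thetaBarCoeff_smul (a : Fin 2) (μ : Fin 4) (g : Fin 4 → Lam) :
    ∑ j, thetaBarCoeff a μ j • g j = ∑ b, (Complex.I * Gam μ a b) • g (θbi b) := by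
  simp [thetaBarCoeff, θbi, Fin.sum_univ_four]

theorem sum_thetaCoeff_smul (b : Fin 2) (μ : Fin 4) (g : Fin 4 → Lam) :
    ∑ j, thetaCoeff b μ j • g j = ∑ a, (Complex.I * Gam μ a b) • g (θi a) := by
  simp [thetaCoeff, θi, Fin.sum_univ_four]

theorem QOp_eq_superDeriv (a : Fin 2) : QOp a = superDeriv (θi a) (thetaBarCoeff a) := by
  ext1 f; ext1 x
  simp only [QOp, superDeriv_apply, sum_thetaBarCoeff_smul]

theorem DOp_eq_superDeriv (a : Fin 2) : DOp a = superDeriv (θi a) (-thetaBarCoeff a) := by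
  ext1 f; ext1 x
  simp only [DOp, superDeriv_apply, Pi.neg_apply, neg_smul, Finset.sum_neg_distrib,
    sum_thetaBarCoeff_smul, sub_eq_add_neg]

theorem QbOp_eq_superDeriv (b : Fin 2) : QbOp b = superDeriv (θbi b) (thetaCoeff b) := by
  ext1 f; ext1 x
  simp only [QbOp, superDeriv_apply, sum_thetaCoeff_smul]

theorem DbOp_eq_superDeriv (b : Fin 2) : DbOp b = superDeriv (θbi b) (-thetaCoeff b) := by
  ext1 f; ext1 x
  simp only [DbOp, superDeriv_apply, Pi.neg_apply, neg_smul, Finset.sum_neg_distrib,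
    sum_thetaCoeff_smul, sub_eq_add_neg]

end SuperDeriv

theorem stmt9_general (f : (Fin 4 → ℝ) → Lam) (hf : ContDiff ℝ 2 f) :
    (∀ a b : Fin 2, ∀ x, DOp a (DOp b f) x + DOp b (DOp a f) x = 0) ∧
    (∀ a b : Fin 2, ∀ x, DbOp a (DbOp b f) x + DbOp b (DbOp a f) x = 0) ∧
    (∀ a b : Fin 2, ∀ x, DOp a (DbOp b f) x + DbOp b (DOp a f) x =
      - ∑ μ : Fin 4, (2 * Complex.I * Gam μ a b) • pd μ f x) ∧
    (∀ a b : Fin 2, ∀ x, QOp a (DOp b f) x + DOp b (QOp a f) x = 0) ∧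
    (∀ a b : Fin 2, ∀ x, QOp a (DbOp b f) x + DbOp b (QOp a f) x = 0) ∧
    (∀ a b : Fin 2, ∀ x, QbOp a (DOp b f) x + DOp b (QbOp a f) x = 0) ∧
    (∀ a b : Fin 2, ∀ x, QbOp a (DbOp b f) x + DbOp b (QbOp a f) x = 0) := by
  simp only [DOp_eq_superDeriv, DbOp_eq_superDeriv, QOp_eq_superDeriv, QbOp_eq_superDeriv,
    superDeriv_anticomm _ _ _ _ hf.contDiffAt, Pi.neg_apply, thetaBarCoeff_θi, thetaBarCoeff_θbi,
    thetaCoeff_θi, thetaCoeff_θbi, ← Finset.sum_neg_distrib]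
  refine ⟨?_, ?_, ?_, ?_, ?_, ?_, ?_⟩ <;> intro a b x
  case refine_3 =>
    refine Finset.sum_congr rfl fun μ _ => ?_
    rw [← neg_smul]
    congr 1
    ring
  all_goals simp

/-- the left-invariant odd derivatives satisfy, on smooth superfunctions
`f : ℝ⁴ → Λ`: (i) `{D_a, D_b} = 0` and `{D̄_a, D̄_b} = 0`;
(ii) `{D_a, D̄_b} = −2i Σ_μ Γ^μ_{ab} ∂_μ`; (iii) every `D_a`, `D̄_a` anticommutes with
every `Q_b`, `Q̄_b`. -/
theorem stmt9 (f : (Fin 4 → ℝ) → Lam) (hf : ContDiff ℝ (⊤ : ℕ∞) f) :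
    -- (i)
    (∀ a b : Fin 2, ∀ x, DOp a (DOp b f) x + DOp b (DOp a f) x = 0) ∧
    (∀ a b : Fin 2, ∀ x, DbOp a (DbOp b f) x + DbOp b (DbOp a f) x = 0) ∧
    -- (ii)
    (∀ a b : Fin 2, ∀ x, DOp a (DbOp b f) x + DbOp b (DOp a f) x =
      - ∑ μ : Fin 4, (2 * Complex.I * Gam μ a b) • pd μ f x) ∧
    -- (iii)
    (∀ a b : Fin 2, ∀ x, QOp a (DOp b f) x + DOp b (QOp a f) x = 0) ∧
    (∀ a b : Fin 2, ∀ x, QOp a (DbOp b f) x + DbOp b (QOp a f) x = 0) ∧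
    (∀ a b : Fin 2, ∀ x, QbOp a (DOp b f) x + DOp b (QbOp a f) x = 0) ∧
    (∀ a b : Fin 2, ∀ x, QbOp a (DbOp b f) x + DbOp b (QbOp a f) x = 0) := by
  exact stmt9_general f (contDiff_infty.1 hf 2)

end
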